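/- Let Ω ⊂ ℝ^N be open, p : Ω → ℝ Lipschitz continuous with 1 < p_min ≤ p(x) ≤ p_max < ∞ (so ∇p exists a.e.), and let u ∈ C²(Ω) satisfy 0 < c₁ ≤ |∇u(x)| ≤ c₂ < ∞ in Ω and be a weak solution of Δ_{p(x)}u = 0 in Ω, i.e. ∫_Ω |∇u|^{p(x)−2}∇u · ∇η dx = 0 for all η ∈ C_c^∞(Ω). Then v = |∇u| satisfies, for every nonnegative ψ ∈ C_c^∞(Ω), the inequality −∫_Ω D_{ij}(x) v_{x_j} ψ_{x_i} dx ≥ ∫_Ω H(x) · ∇ψ dx + ∫_Ω (B(x) · ∇v) ψ dx, where D_{ij}(x) = |∇u|^{p(x)−1} ( δ_{ij} + ((p(x)−2)/|∇u|²) u_{x_i} u_{x_j} ), H(x) = |∇u|^{p(x)−2} log|∇u| ⟨∇u, ∇p⟩ ∇u, and B(x) = |∇u|^{p(x)−1} log|∇u| ∇p; that is, v is a weak subsolution of − div(D∇v) + B·∇v ≤ div H in Ω. -/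

import Mathlib

open scoped RealInnerProductSpace
open MeasureTheory

/-!
The flux `F = |∇u|^(p-2) ∇u` is locally Lipschitz and divergence free, and weak second derivatives
commute, so `∫ tr(DF ∘ Dζ) = ∫ (div F) (div ζ) = 0` for every compactly supported Lipschitz field
`ζ`. Take `ζ = ψ ∇u`. Since `D²u` is symmetric, `D²u ∇u = v ∇v` with `v = |∇u|`, and expanding the
trace gives almost everywhere

`tr(DF ∘ Dζ) = H·∇ψ + (B·∇v) ψ + D∇v·∇ψ + ψ |∇u|^(p-2) (tr((D²u)²) + (p-2) |∇v|²)`.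

The last term is nonnegative, because `|∇v|² ≤ tr((D²u)²)` and `1 ≤ p`.
-/

section EssentiallyBounded

variable {X F G : Type*} [MeasurableSpace X] {μ : Measure X}

lemma memLp_top_clm_apply [NormedAddCommGroup F] [NormedSpace ℝ F] [NormedAddCommGroup G]
    [NormedSpace ℝ G] {A : X → F →L[ℝ] G} {f : X → F} (hA : MemLp A ⊤ μ) (hf : MemLp f ⊤ μ) :
    MemLp (fun x => A x (f x)) ⊤ μ :=
  (ContinuousLinearMap.id ℝ (F →L[ℝ] G)).memLp_of_bilin ⊤ hA hf

lemma memLp_top_inner [NormedAddCommGroup F] [InnerProductSpace ℝ F] {f g : X → F}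
    (hf : MemLp f ⊤ μ) (hg : MemLp g ⊤ μ) : MemLp (fun x => ⟪f x, g x⟫) ⊤ μ :=
  (innerSL ℝ).memLp_of_bilin ⊤ hf hg

lemma integrable_of_memLp_top_restrict [TopologicalSpace X] [IsFiniteMeasureOnCompacts μ]
    [NormedAddCommGroup F] {K : Set X} (hK : IsCompact K) {f : X → F}
    (hf : MemLp f ⊤ (μ.restrict K)) (hfK : Function.support f ⊆ K) : Integrable f μ := by
  have : IsFiniteMeasure (μ.restrict K) := isFiniteMeasure_restrict.mpr hK.measure_lt_top.ne
  exact (integrableOn_iff_integrable_of_support_subset hfK).mp (hf.integrable le_top)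

variable [NormedAddCommGroup X] [BorelSpace X]

lemma memLp_top_of_continuousOn [NormedAddCommGroup F] {K : Set X} (hK : IsCompact K) {f : X → F}
    (hf : ContinuousOn f K) : MemLp f ⊤ (μ.restrict K) := by
  obtain ⟨C, hC⟩ := hK.exists_bound_of_continuousOn hf
  exact memLp_top_of_bound (hf.aestronglyMeasurable_of_isCompact hK hK.measurableSet) C
    (ae_restrict_of_forall_mem hK.measurableSet hC)

lemma integrable_mul_of_memLp_top_restrict [IsFiniteMeasureOnCompacts μ] {f ψ : X → ℝ}
    (hψ : Continuous ψ) (hψc : HasCompactSupport ψ)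
    (hf : MemLp f ⊤ (μ.restrict (tsupport ψ))) : Integrable (fun x => f x * ψ x) μ :=
  integrable_of_memLp_top_restrict hψc
    ((memLp_top_of_continuousOn hψc hψ.continuousOn).mul' hf)
    ((Function.support_mul_subset_right f ψ).trans (subset_tsupport ψ))

end EssentiallyBounded

section LocallyLipschitz

open scoped Topology

lemma locallyLipschitzOn_prodMk {α β γ : Type*} [PseudoEMetricSpace α] [PseudoEMetricSpace β]
    [PseudoEMetricSpace γ] {s : Set α} {f : α → β} {g : α → γ} (hf : LocallyLipschitzOn s f)
    (hg : LocallyLipschitzOn s g) : LocallyLipschitzOn s fun x => (f x, g x) := fun x hx => by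
  obtain ⟨K, t, ht, hfK⟩ := hf hx
  obtain ⟨L, t', ht', hgL⟩ := hg hx
  exact ⟨max K L, t ∩ t', Filter.inter_mem ht ht',
    (hfK.mono Set.inter_subset_left).prodMk (hgL.mono Set.inter_subset_right)⟩

lemma locallyLipschitzOn_comp_of_contDiffAt {α E F : Type*} [PseudoEMetricSpace α]
    [NormedAddCommGroup E] [NormedSpace ℝ E] [NormedAddCommGroup F] [NormedSpace ℝ F] {s : Set α}
    {φ : E → F} {f : α → E} (hφ : ∀ x ∈ s, ContDiffAt ℝ 1 φ (f x)) (hf : LocallyLipschitzOn s f) :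
    LocallyLipschitzOn s (φ ∘ f) := fun x hx => by
  obtain ⟨K, t, ht, hfK⟩ := hf hx
  obtain ⟨L, t', ht', hφL⟩ := (hφ x hx).exists_lipschitzOnWith
  exact ⟨L * K, t ∩ f ⁻¹' t', Filter.inter_mem ht (hf.continuousOn x hx ht'),
    hφL.comp (hfK.mono Set.inter_subset_left) fun y hy => hy.2⟩

lemma locallyLipschitzOn_norm {α E : Type*} [PseudoEMetricSpace α] [NormedAddCommGroup E]
    {s : Set α} {g : α → E} (hg : LocallyLipschitzOn s g) :
    LocallyLipschitzOn s fun x => ‖g x‖ := fun x hx => by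
  obtain ⟨K, t, ht, hK⟩ := hg hx
  exact ⟨_, t, ht, lipschitzWith_one_norm.comp_lipschitzOnWith hK⟩

variable {E F : Type*} [NormedAddCommGroup E] [NormedAddCommGroup F]

lemma exists_lipschitzWith_of_hasCompactSupport [ProperSpace E] {f : E → F}
    (hf : LocallyLipschitz f) (hfc : HasCompactSupport f) : ∃ C, LipschitzWith C f := by
  obtain ⟨L, hL⟩ := LocallyLipschitzOn.exists_lipschitzOnWith_of_compact
    (hfc.isCompact.cthickening (r := 1)) hf.locallyLipschitzOn
  obtain ⟨M, hM⟩ := hf.continuous.bounded_above_of_compact_support hfc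
  have near : ∀ x ∈ tsupport f, ∀ y, dist (f x) (f y) ≤ max (L : ℝ) M * dist x y := by
    intro x hx y
    by_cases hy : y ∈ Metric.cthickening 1 (tsupport f)
    · exact (hL.dist_le_mul x (Metric.self_subset_cthickening _ hx) y hy).trans (by gcongr; simp)
    · have hfy : f y = 0 :=
        image_eq_zero_of_notMem_tsupport fun h => hy (Metric.self_subset_cthickening _ h)
      have hdist : 1 ≤ dist x y := by
        by_contra! h
        exact hy (Metric.mem_cthickening_of_dist_le y x _ _ hx (by rw [dist_comm]; exact h.le))
      calc dist (f x) (f y) ≤ M := by simpa [hfy] using hM x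
        _ ≤ max (L : ℝ) M := le_max_right _ _
        _ ≤ max (L : ℝ) M * dist x y := le_mul_of_one_le_right (by positivity) hdist
  refine ⟨_, LipschitzWith.of_dist_le' (K := max (L : ℝ) M) fun x y => ?_⟩
  by_cases hx : x ∈ tsupport f
  · exact near x hx y
  by_cases hy : y ∈ tsupport f
  · rw [dist_comm, dist_comm x]
    exact near y hy x
  · rw [image_eq_zero_of_notMem_tsupport hx, image_eq_zero_of_notMem_tsupport hy, dist_self]
    positivity

variable [NormedSpace ℝ F]

lemma locallyLipschitzOn_smul {s : Set E} {ρ : E → ℝ} {f : E → F} (hρ : LocallyLipschitzOn s ρ)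
    (hf : LocallyLipschitzOn s f) : LocallyLipschitzOn s fun x => ρ x • f x :=
  locallyLipschitzOn_comp_of_contDiffAt (φ := fun z : ℝ × F => z.1 • z.2)
    (fun _ _ => by fun_prop) (locallyLipschitzOn_prodMk hρ hf)

lemma locallyLipschitzOn_of_contDiffOn [NormedSpace ℝ E] {U : Set E} (hU : IsOpen U) {f : E → F}
    (hf : ContDiffOn ℝ 1 f U) : LocallyLipschitzOn U f :=
  locallyLipschitzOn_comp_of_contDiffAt (f := id) (fun _ hx => hf.contDiffAt (hU.mem_nhds hx))
    LocallyLipschitz.id.locallyLipschitzOn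

lemma locallyLipschitz_smul_of_tsupport_subset {U : Set E} (hU : IsOpen U) {ρ : E → ℝ} {f : E → F}
    (hρ : LocallyLipschitz ρ) (hρU : tsupport ρ ⊆ U) (hf : LocallyLipschitzOn U f) :
    LocallyLipschitz fun x => ρ x • f x := fun x => by
  by_cases hx : x ∈ U
  · obtain ⟨K, t, ht, hK⟩ := locallyLipschitzOn_smul hρ.locallyLipschitzOn hf hx
    exact ⟨K, t, hU.nhdsWithin_eq hx ▸ ht, hK⟩
  · have hzero : {y | ρ y = 0} ∈ 𝓝 x :=
      notMem_tsupport_iff_eventuallyEq.mp fun hx' => hx (hρU hx')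
    refine ⟨0, _, hzero, fun y hy z hz => ?_⟩
    simp only [Set.mem_ofPred_eq] at hy hz
    simp [hy, hz]

variable [NormedSpace ℝ E] [FiniteDimensional ℝ E]

lemma exists_contDiff_cutoff {K U : Set E} (hK : IsCompact K) (hU : IsOpen U) (hKU : K ⊆ U) :
    ∃ χ : E → ℝ, ContDiff ℝ 1 χ ∧ HasCompactSupport χ ∧ tsupport χ ⊆ U ∧
      ∀ᶠ x in 𝓝ˢ K, χ x = 1 := by
  obtain ⟨K', hK', hKK', hK'U⟩ := exists_compact_between hK hU hKU
  obtain ⟨χ, hχ1, hχ0, -⟩ := exists_contMDiffMap_one_nhds_of_subset_interior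
    (n := 1) (modelWithCornersSelf ℝ E) hK.isClosed hKK'
  have hsupp : tsupport χ ⊆ K' :=
    closure_minimal (fun x hx => not_imp_comm.mp (hχ0 x) hx) hK'.isClosed
  exact ⟨χ, χ.contMDiff.contDiff, hK'.of_isClosed_subset (isClosed_tsupport _) hsupp,
    hsupp.trans hK'U, hχ1⟩

lemma exists_lipschitzWith_eventuallyEq_nhdsSet {K U : Set E} (hK : IsCompact K) (hU : IsOpen U)
    (hKU : K ⊆ U) {f : E → F} (hf : LocallyLipschitzOn U f) :
    ∃ (C : NNReal) (g : E → F), LipschitzWith C g ∧ HasCompactSupport g ∧ g =ᶠ[𝓝ˢ K] f := by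
  have : ProperSpace E := FiniteDimensional.proper ℝ E
  obtain ⟨χ, hχ, hχc, hχU, hχ1⟩ := exists_contDiff_cutoff hK hU hKU
  obtain ⟨C, hC⟩ := exists_lipschitzWith_of_hasCompactSupport
    (locallyLipschitz_smul_of_tsupport_subset hU hχ.locallyLipschitz hχU hf) hχc.smul_right
  exact ⟨C, _, hC, hχc.smul_right, hχ1.mono fun x hx => by simp [hx]⟩

lemma ae_differentiableAt_of_locallyLipschitzOn [FiniteDimensional ℝ F] [MeasurableSpace E]
    [BorelSpace E] {μ : Measure E} [μ.IsAddHaarMeasure] {U : Set E} (hU : IsOpen U) {f : E → F}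
    (hf : LocallyLipschitzOn U f) : ∀ᵐ x ∂μ, x ∈ U → DifferentiableAt ℝ f x := by
  refine measure_null_of_locally_null _ fun x hx => ?_
  obtain ⟨hxU, -⟩ := Classical.not_imp.mp hx
  obtain ⟨K, t, ht, hK⟩ := hf hxU
  rw [hU.nhdsWithin_eq hxU] at ht
  refine ⟨_, inter_mem_nhdsWithin _ (interior_mem_nhds.mpr ht), measure_mono_null ?_
    ((hK.mono interior_subset).ae_differentiableWithinAt_of_mem (μ := μ))⟩
  rintro y ⟨hy, hyt⟩ hdiff
  exact hy fun _ => (hdiff hyt).differentiableAt (isOpen_interior.mem_nhds hyt)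

end LocallyLipschitz

section Lipschitz

open scoped Topology

variable {E : Type*} [NormedAddCommGroup E] [NormedSpace ℝ E]

lemma lineDeriv_comp_add_right (f : E → ℝ) (a x w : E) :
    lineDeriv ℝ (fun y => f (y + a)) x w = lineDeriv ℝ f (x + a) w := by
  simp only [lineDeriv, add_right_comm]

variable [MeasurableSpace E] [BorelSpace E] {μ : Measure E}

lemma integrable_mul_lineDeriv [μ.IsAddHaarMeasure] {f g : E → ℝ} {C : NNReal}
    (hf : Continuous f) (hfc : HasCompactSupport f) (hg : LipschitzWith C g) (v : E) :
    Integrable (fun x => f x * lineDeriv ℝ g x v) μ :=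
  (hf.integrable_of_hasCompactSupport hfc).mul_of_top_left (hg.memLp_lineDeriv v)

variable [FiniteDimensional ℝ E] {F : Type*} [NormedAddCommGroup F] [NormedSpace ℝ F]
  [FiniteDimensional ℝ F]

lemma memLp_top_fderiv {f : E → F} {C : NNReal} (hf : LipschitzWith C f) :
    MemLp (fderiv ℝ f) ⊤ μ :=
  have : CompleteSpace F := FiniteDimensional.complete ℝ F
  memLp_top_of_bound (measurable_fderiv ℝ f).aestronglyMeasurable C
    (.of_forall fun _ => norm_fderiv_le_of_lipschitz ℝ hf)

variable [μ.IsAddHaarMeasure]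

lemma integrable_fderiv {f : E → F} {C : NNReal} (hf : LipschitzWith C f)
    (hfc : HasCompactSupport f) : Integrable (fderiv ℝ f) μ :=
  integrable_of_memLp_top_restrict hfc ((memLp_top_fderiv hf).restrict _)
    (support_fderiv_subset ℝ)

lemma integrable_lineDeriv_of_hasCompactSupport {f : E → F} {C : NNReal} (hf : LipschitzWith C f)
    (hfc : HasCompactSupport f) (v : E) : Integrable (fun x => lineDeriv ℝ f x v) μ :=
  ((ContinuousLinearMap.apply ℝ F v).integrable_comp (integrable_fderiv hf hfc)).congr <|
    hf.ae_differentiableAt.mono fun _ hx => hx.lineDeriv_eq_fderiv.symm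

lemma integral_translate_sub_mul_lineDeriv {f g : E → ℝ} {C D : NNReal} (hf : LipschitzWith C f)
    (hfc : HasCompactSupport f) (hg : LipschitzWith D g) (hgc : HasCompactSupport g) (a w : E) :
    ∫ x, (f (x + a) - f x) * lineDeriv ℝ g x w ∂μ =
      ∫ x, (g (x + -a) - g x) * lineDeriv ℝ f x (-w) ∂μ := by
  have hfa : LipschitzWith C fun x => f (x + a) := fun x y => by
    simpa using hf (x + a) (y + a)
  have hfac : HasCompactSupport fun x => f (x + a) := hfc.comp_homeomorph (Homeomorph.addRight a)
  have hgac : HasCompactSupport fun x => g (x + -a) :=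
    hgc.comp_homeomorph (Homeomorph.addRight (-a))
  have hga : Continuous fun x => g (x + -a) := hg.continuous.comp (continuous_add_const _)
  have by_parts {h : E → ℝ} (hh : LipschitzWith C h) (hhc : HasCompactSupport h) :
      ∫ x, h x * lineDeriv ℝ g x w ∂μ = ∫ x, g x * lineDeriv ℝ h x (-w) ∂μ := by
    simpa only [mul_comm] using hg.integral_lineDeriv_mul_eq (μ := μ) hh hhc w
  have translate : ∫ x, g x * lineDeriv ℝ f (x + a) (-w) ∂μ =
      ∫ x, g (x + -a) * lineDeriv ℝ f x (-w) ∂μ := by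
    rw [← integral_add_right_eq_self _ (-a)]
    simp only [neg_add_cancel_right]
  simp only [_root_.sub_mul]
  rw [integral_sub (integrable_mul_lineDeriv hfa.continuous hfac hg w)
      (integrable_mul_lineDeriv hf.continuous hfc hg w), by_parts hfa hfac, by_parts hf hfc,
    integral_sub (integrable_mul_lineDeriv hga hgac hf _)
      (integrable_mul_lineDeriv hg.continuous hgc hf _), ← translate]
  simp only [lineDeriv_comp_add_right]

/-- Only first derivatives exist, so the identity is proved for difference quotients of `f` in the
direction `v`, which a translation moves onto `g`. -/
lemma integral_lineDeriv_mul_lineDeriv_comm {f g : E → ℝ} {C D : NNReal}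
    (hf : LipschitzWith C f) (hfc : HasCompactSupport f)
    (hg : LipschitzWith D g) (hgc : HasCompactSupport g) (v w : E) :
    ∫ x, lineDeriv ℝ f x v * lineDeriv ℝ g x w ∂μ =
      ∫ x, lineDeriv ℝ f x w * lineDeriv ℝ g x v ∂μ := by
  have hlimf := hf.integral_inv_smul_sub_mul_tendsto_integral_lineDeriv_mul
    (integrable_lineDeriv_of_hasCompactSupport (μ := μ) hg hgc w) v
  have hlimg := hg.integral_inv_smul_sub_mul_tendsto_integral_lineDeriv_mul
    (integrable_lineDeriv_of_hasCompactSupport (μ := μ) hf hfc (-w)) (-v)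
  simp only [smul_eq_mul, mul_assoc, integral_const_mul, smul_neg] at hlimf hlimg
  simp only [integral_translate_sub_mul_lineDeriv hf hfc hg hgc] at hlimf
  rw [tendsto_nhds_unique hlimf hlimg]
  simp only [lineDeriv_neg, neg_mul_neg, mul_comm (lineDeriv ℝ f _ _)]

lemma integral_lineDeriv_eq_zero {f : E → ℝ} {C : NNReal} (hf : LipschitzWith C f)
    (hfc : HasCompactSupport f) (v : E) : ∫ x, lineDeriv ℝ f x v ∂μ = 0 := by
  simpa [lineDeriv] using
    ((LipschitzWith.const (1 : ℝ)).integral_lineDeriv_mul_eq (μ := μ) hf hfc (-v)).symm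

lemma integrable_clm_fderiv_mul_clm_fderiv {f g : E → F} {C D : NNReal}
    (hf : LipschitzWith C f) (hfc : HasCompactSupport f) (hg : LipschitzWith D g) (φ χ : F →L[ℝ] ℝ)
    (v w : E) : Integrable (fun x => φ (fderiv ℝ f x v) * χ (fderiv ℝ g x w)) μ :=
  ((φ ∘L .apply ℝ F v).integrable_comp (integrable_fderiv hf hfc)).mul_of_top_left
    ((χ ∘L .apply ℝ F w).comp_memLp' (memLp_top_fderiv hg))

lemma ae_lineDeriv_clm_comp_eq {f : E → F} {C : NNReal} (hf : LipschitzWith C f)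
    (φ : F →L[ℝ] ℝ) (v : E) :
    (fun x => lineDeriv ℝ (φ ∘ f) x v) =ᵐ[μ] fun x => φ (fderiv ℝ f x v) := by
  filter_upwards [hf.ae_differentiableAt (μ := μ)] with x hx
  exact ((φ.hasFDerivAt.comp x hx.hasFDerivAt).hasLineDerivAt v).lineDeriv

lemma integral_clm_fderiv_mul_clm_fderiv_comm {f g : E → F} {C D : NNReal}
    (hf : LipschitzWith C f) (hfc : HasCompactSupport f)
    (hg : LipschitzWith D g) (hgc : HasCompactSupport g) (φ χ : F →L[ℝ] ℝ) (v w : E) :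
    ∫ x, φ (fderiv ℝ f x v) * χ (fderiv ℝ g x w) ∂μ =
      ∫ x, φ (fderiv ℝ f x w) * χ (fderiv ℝ g x v) ∂μ := by
  calc _ = ∫ x, lineDeriv ℝ (φ ∘ f) x v * lineDeriv ℝ (χ ∘ g) x w ∂μ := (integral_congr_ae <|
        (ae_lineDeriv_clm_comp_eq hf φ v).mul (ae_lineDeriv_clm_comp_eq hg χ w)).symm
    _ = ∫ x, lineDeriv ℝ (φ ∘ f) x w * lineDeriv ℝ (χ ∘ g) x v ∂μ :=
        integral_lineDeriv_mul_lineDeriv_comm (φ.lipschitz.comp hf)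
          (hfc.comp_left (map_zero φ)) (χ.lipschitz.comp hg) (hgc.comp_left (map_zero χ)) v w
    _ = _ := integral_congr_ae <|
        (ae_lineDeriv_clm_comp_eq hf φ w).mul (ae_lineDeriv_clm_comp_eq hg χ v)

end Lipschitz

section Divergence

variable {E : Type*} [NormedAddCommGroup E] [NormedSpace ℝ E] [FiniteDimensional ℝ E]

variable (E) in
/-- The trace as a continuous linear functional on the continuous endomorphisms of `E`. -/
noncomputable def traceCLM : (E →L[ℝ] E) →L[ℝ] ℝ :=
  (LinearMap.trace ℝ E ∘ₗ ContinuousLinearMap.coeLM ℝ).toContinuousLinearMap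

/-- The divergence of a vector field, as the trace of its derivative; it has the junk value `0`
where `F` is not differentiable. -/
noncomputable def divergence (F : E → E) (x : E) : ℝ := traceCLM E (fderiv ℝ F x)

lemma traceCLM_eq_sum_coord {ι : Type*} [Fintype ι] (b : Module.Basis ι ℝ E) (A : E →L[ℝ] E) :
    traceCLM E A = ∑ i, (b.coord i).toContinuousLinearMap (A (b i)) := by
  classical
  simp [traceCLM, LinearMap.trace_eq_matrix_trace ℝ b, Matrix.trace, LinearMap.toMatrix_apply]

lemma traceCLM_comp_eq_sum_coord {ι : Type*} [Fintype ι] (b : Module.Basis ι ℝ E)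
    (A B : E →L[ℝ] E) :
    traceCLM E (A ∘L B) = ∑ i, ∑ k, (b.coord i).toContinuousLinearMap (A (b k)) *
      (b.coord k).toContinuousLinearMap (B (b i)) := by
  simp only [traceCLM_eq_sum_coord b, ContinuousLinearMap.comp_apply]
  refine Finset.sum_congr rfl fun i _ => ?_
  calc (b.coord i).toContinuousLinearMap (A (B (b i)))
      = (b.coord i).toContinuousLinearMap (A (∑ k, b.repr (B (b i)) k • b k)) := by
        rw [b.sum_repr]
    _ = _ := by
        simp only [map_sum, map_smul, smul_eq_mul]
        exact Finset.sum_congr rfl fun k _ => mul_comm _ _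

lemma traceCLM_smulRight (φ : E →L[ℝ] ℝ) (a : E) : traceCLM E (φ.smulRight a) = φ a :=
  LinearMap.trace_smulRight (φ : E →ₗ[ℝ] ℝ) a

lemma divergence_smul {η : E → ℝ} {F : E → E} {x : E} (hη : DifferentiableAt ℝ η x)
    (hF : DifferentiableAt ℝ F x) :
    divergence (fun y => η y • F y) x = η x * divergence F x + fderiv ℝ η x (F x) := by
  rw [divergence, fderiv_fun_smul hη hF, map_add, map_smul, traceCLM_smulRight, smul_eq_mul,
    divergence]

variable [MeasurableSpace E] [BorelSpace E] {μ : Measure E} [μ.IsAddHaarMeasure]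

lemma integral_divergence_eq_zero {F : E → E} {C : NNReal} (hF : LipschitzWith C F)
    (hFc : HasCompactSupport F) : ∫ x, divergence F x ∂μ = 0 := by
  let b := Module.finBasis ℝ E
  let φ i := (b.coord i).toContinuousLinearMap
  simp only [divergence, traceCLM_eq_sum_coord b]
  rw [integral_finsetSum _ fun i _ => show Integrable (fun x => φ i (fderiv ℝ F x (b i))) μ from
    (φ i ∘L .apply ℝ E (b i)).integrable_comp (integrable_fderiv hF hFc)]
  refine Finset.sum_eq_zero fun i _ => ?_
  rw [← integral_lineDeriv_eq_zero (μ := μ) ((φ i).lipschitz.comp hF)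
    (hFc.comp_left (map_zero (φ i))) (b i)]
  exact integral_congr_ae (ae_lineDeriv_clm_comp_eq hF (φ i) (b i)).symm

lemma integral_traceCLM_fderiv_comp_fderiv {F G : E → E} {C D : NNReal}
    (hF : LipschitzWith C F) (hFc : HasCompactSupport F)
    (hG : LipschitzWith D G) (hGc : HasCompactSupport G) :
    ∫ x, traceCLM E (fderiv ℝ F x ∘L fderiv ℝ G x) ∂μ =
      ∫ x, divergence F x * divergence G x ∂μ := by
  let b := Module.finBasis ℝ E
  let φ i := (b.coord i).toContinuousLinearMap
  have hprod i k v w := integrable_clm_fderiv_mul_clm_fderiv (μ := μ) hF hFc hG (φ i) (φ k) v w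
  simp only [divergence, traceCLM_comp_eq_sum_coord b, traceCLM_eq_sum_coord b, Finset.sum_mul_sum]
  rw [integral_finsetSum _ fun i _ => integrable_finsetSum _ fun k _ => hprod i k _ _,
    integral_finsetSum _ fun i _ => integrable_finsetSum _ fun k _ => hprod i k _ _]
  refine Finset.sum_congr rfl fun i _ => ?_
  rw [integral_finsetSum _ fun k _ => hprod i k _ _, integral_finsetSum _ fun k _ => hprod i k _ _]
  exact Finset.sum_congr rfl fun k _ =>
    integral_clm_fderiv_mul_clm_fderiv_comm hF hFc hG hGc (φ i) (φ k) (b k) (b i)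

end Divergence

section WeaklyDivFree

variable {E F : Type*} [NormedAddCommGroup E] [NormedSpace ℝ E] [FiniteDimensional ℝ E]
  [NormedAddCommGroup F] [NormedSpace ℝ F] [FiniteDimensional ℝ F]
  [MeasurableSpace E] [BorelSpace E] {μ : Measure E} {U : Set E}

lemma memLp_top_fderiv_of_locallyLipschitzOn (hU : IsOpen U) {f : E → F}
    (hf : LocallyLipschitzOn U f) {K : Set E} (hK : IsCompact K) (hKU : K ⊆ U) :
    MemLp (fderiv ℝ f) ⊤ (μ.restrict K) := by
  obtain ⟨C, g, hg, -, hgf⟩ := exists_lipschitzWith_eventuallyEq_nhdsSet hK hU hKU hf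
  refine (memLp_congr_ae ?_).mp ((memLp_top_fderiv hg).restrict K)
  filter_upwards [ae_restrict_mem hK.measurableSet] with x hx
  exact (hgf.filter_mono (nhds_le_nhdsSet hx)).fderiv_eq

/-- `F` has vanishing divergence on `U` in the sense of distributions. The pairing `⟪F, ∇η⟫` with a
test function is written `dη(F)`, which needs no inner product. -/
def WeaklyDivFreeOn (F : E → E) (U : Set E) (μ : Measure E) : Prop :=
  ∀ η : E → ℝ, ContDiff ℝ (⊤ : ℕ∞) η → HasCompactSupport η → tsupport η ⊆ U →
    ∫ x in U, fderiv ℝ η x (F x) ∂μ = 0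

variable [μ.IsAddHaarMeasure]

lemma integrable_traceCLM_fderiv_comp_fderiv (hU : IsOpen U) {F ζ : E → E} {C : NNReal}
    (hF : LocallyLipschitzOn U F) (hζ : LipschitzWith C ζ) (hζc : HasCompactSupport ζ)
    (hζU : tsupport ζ ⊆ U) :
    Integrable (fun x => traceCLM E (fderiv ℝ F x ∘L fderiv ℝ ζ x)) μ := by
  have hcomp : MemLp (fun x => fderiv ℝ F x ∘L fderiv ℝ ζ x) ⊤ (μ.restrict (tsupport ζ)) :=
    (ContinuousLinearMap.compL ℝ E E E).memLp_of_bilin ⊤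
      (memLp_top_fderiv_of_locallyLipschitzOn hU hF hζc hζU) ((memLp_top_fderiv hζ).restrict _)
  refine integrable_of_memLp_top_restrict hζc ((traceCLM E).comp_memLp' hcomp) ?_
  exact fun x hx => support_fderiv_subset ℝ fun h => hx (by simp [h])

lemma locallyIntegrableOn_divergence (hU : IsOpen U) {F : E → E} (hF : LocallyLipschitzOn U F) :
    LocallyIntegrableOn (divergence F) U μ := by
  have : ProperSpace E := FiniteDimensional.proper ℝ E
  refine (locallyIntegrableOn_iff hU.isLocallyClosed).mpr fun K hKU hK => ?_
  have : IsFiniteMeasure (μ.restrict K) := isFiniteMeasure_restrict.mpr hK.measure_lt_top.ne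
  exact ((traceCLM E).comp_memLp' (memLp_top_fderiv_of_locallyLipschitzOn hU hF hK hKU)).integrable
    le_top

lemma ae_divergence_smul (hU : IsOpen U) {F : E → E} (hF : LocallyLipschitzOn U F) {η : E → ℝ}
    (hη : Differentiable ℝ η) (hηU : tsupport η ⊆ U) : ∀ᵐ x ∂μ,
      divergence (fun y => η y • F y) x = η x * divergence F x + fderiv ℝ η x (F x) := by
  filter_upwards [ae_differentiableAt_of_locallyLipschitzOn (μ := μ) hU hF] with x hx
  by_cases hxη : x ∈ tsupport η
  · exact divergence_smul (hη x) (hx (hηU hxη))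
  · have hzero : (fun y => η y • F y) =ᶠ[nhds x] 0 :=
      (notMem_tsupport_iff_eventuallyEq.mp hxη).mono fun y hy => by simp [hy]
    rw [divergence, hzero.fderiv_eq, image_eq_zero_of_notMem_tsupport hxη,
      (notMem_tsupport_iff_eventuallyEq.mp hxη).fderiv_eq]
    simp

lemma ae_divergence_eq_zero (hU : IsOpen U) {F : E → E} (hF : LocallyLipschitzOn U F)
    (hdiv : WeaklyDivFreeOn F U μ) : ∀ᵐ x ∂μ, x ∈ U → divergence F x = 0 := by
  have : ProperSpace E := FiniteDimensional.proper ℝ E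
  refine hU.ae_eq_zero_of_integral_contDiff_smul_eq_zero
    (locallyIntegrableOn_divergence hU hF) fun η hη hηc hηU => ?_
  obtain ⟨C, hηF⟩ := exists_lipschitzWith_of_hasCompactSupport
    (locallyLipschitz_smul_of_tsupport_subset hU (hη.of_le (by simp)).locallyLipschitz hηU hF)
    hηc.smul_right
  have hintegrable_divergence : Integrable (divergence fun y => η y • F y) μ :=
    (traceCLM E).integrable_comp (integrable_fderiv hηF hηc.smul_right)
  have hintegrable_smul : Integrable (fun x => η x • divergence F x) μ := by
    rw [← integrableOn_iff_integrable_of_support_subset (f := fun x => η x • divergence F x)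
      ((Function.support_smul_subset_left η (divergence F)).trans (subset_tsupport η))]
    exact ((locallyIntegrableOn_divergence hU hF).integrableOn_compact_subset hηU
      hηc).continuousOn_smul hη.continuous.continuousOn hηc
  have hflux : ∫ x, fderiv ℝ η x (F x) ∂μ = 0 := by
    rw [← hdiv η hη hηc hηU]
    refine (setIntegral_eq_integral_of_forall_compl_eq_zero fun x hx => ?_).symm
    rw [(notMem_tsupport_iff_eventuallyEq.mp fun hxη => hx (hηU hxη)).fderiv_eq]
    simp
  calc ∫ x, η x • divergence F x ∂μ
      = ∫ x, divergence (fun y => η y • F y) x ∂μ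
          - ∫ x, (divergence (fun y => η y • F y) x - η x • divergence F x) ∂μ := by
        rw [integral_sub hintegrable_divergence hintegrable_smul, sub_sub_cancel]
    _ = 0 - ∫ x, fderiv ℝ η x (F x) ∂μ := by
        rw [integral_divergence_eq_zero hηF hηc.smul_right]
        congr 1
        refine integral_congr_ae ?_
        filter_upwards [ae_divergence_smul hU hF (hη.differentiable (by simp)) hηU] with x hx
        rw [hx, smul_eq_mul, add_sub_cancel_left]
    _ = 0 := by rw [hflux, sub_zero]

/-- The equation `div F = 0`, differentiated and tested with `ζ`. -/
lemma setIntegral_traceCLM_fderiv_comp_fderiv_eq_zero (hU : IsOpen U) {F ζ : E → E} {C : NNReal}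
    (hF : LocallyLipschitzOn U F) (hdiv : WeaklyDivFreeOn F U μ) (hζ : LipschitzWith C ζ)
    (hζc : HasCompactSupport ζ) (hζU : tsupport ζ ⊆ U) :
    ∫ x in U, traceCLM E (fderiv ℝ F x ∘L fderiv ℝ ζ x) ∂μ = 0 := by
  obtain ⟨D, G, hG, hGc, hGF⟩ := exists_lipschitzWith_eventuallyEq_nhdsSet hζc.isCompact hU hζU hF
  have hζ0 {x} (hx : x ∉ tsupport ζ) : fderiv ℝ ζ x = 0 := by
    rw [(notMem_tsupport_iff_eventuallyEq.mp hx).fderiv_eq]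
    simp
  have hDG {x} (hx : x ∈ tsupport ζ) : fderiv ℝ G x = fderiv ℝ F x :=
    (hGF.filter_mono (nhds_le_nhdsSet hx)).fderiv_eq
  calc ∫ x in U, traceCLM E (fderiv ℝ F x ∘L fderiv ℝ ζ x) ∂μ
      = ∫ x, traceCLM E (fderiv ℝ F x ∘L fderiv ℝ ζ x) ∂μ :=
        setIntegral_eq_integral_of_forall_compl_eq_zero fun x hx => by
          simp [hζ0 fun hxζ => hx (hζU hxζ)]
    _ = ∫ x, traceCLM E (fderiv ℝ G x ∘L fderiv ℝ ζ x) ∂μ := by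
        congr with x
        by_cases hx : x ∈ tsupport ζ
        · rw [hDG hx]
        · simp [hζ0 hx]
    _ = ∫ x, divergence G x * divergence ζ x ∂μ :=
        integral_traceCLM_fderiv_comp_fderiv hG hGc hζ hζc
    _ = 0 := by
        refine integral_eq_zero_of_ae ?_
        filter_upwards [ae_divergence_eq_zero hU hF hdiv] with x hxF
        by_cases hx : x ∈ tsupport ζ
        · simp [divergence, hDG hx, show traceCLM E (fderiv ℝ F x) = 0 from hxF (hζU hx)]
        · simp [divergence, hζ0 hx]

end WeaklyDivFree

section Gradient

variable {E : Type*} [NormedAddCommGroup E] [InnerProductSpace ℝ E] [CompleteSpace E]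

lemma innerSL_gradient (f : E → ℝ) (x : E) : innerSL ℝ (gradient f x) = fderiv ℝ f x := by
  ext y
  simp

lemma contDiffOn_gradient {u : E → ℝ} {U : Set E} (hU : IsOpen U) {n : WithTop ℕ∞}
    (hu : ContDiffOn ℝ (n + 1) u U) : ContDiffOn ℝ n (gradient u) U :=
  (InnerProductSpace.toDual ℝ E).symm.toContinuousLinearEquiv.contDiff.comp_contDiffOn
    (hu.fderiv_of_isOpen hU le_rfl)

lemma isSymmetric_fderiv_gradient {u : E → ℝ} {x : E} (hu : ∀ᶠ y in nhds x, DifferentiableAt ℝ u y)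
    (hu' : DifferentiableAt ℝ (gradient u) x) :
    (fderiv ℝ (gradient u) x : E →ₗ[ℝ] E).IsSymmetric := fun v w => by
  have hf' := (InnerProductSpace.toDual ℝ E).toContinuousLinearEquiv.hasFDerivAt.comp x
    hu'.hasFDerivAt
  have hsymm := second_derivative_symmetric_of_eventually
    (hu.mono fun y hy => hy.hasGradientAt.hasFDerivAt) hf' v w
  simpa [real_inner_comm] using hsymm

lemma fderiv_apply_self_eq_norm_smul_gradient_norm {g : E → E} {x : E}
    (hg : DifferentiableAt ℝ g x) (hgx : g x ≠ 0) (hsymm : (fderiv ℝ g x : E →ₗ[ℝ] E).IsSymmetric) :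
    fderiv ℝ g x (g x) = ‖g x‖ • gradient (fun y => ‖g y‖) x := by
  have hsq := ((hg.norm ℝ hgx).hasFDerivAt.pow 2).unique hg.hasFDerivAt.norm_sq
  refine ext_inner_right ℝ fun y => ?_
  calc ⟪fderiv ℝ g x (g x), y⟫ = ⟪g x, fderiv ℝ g x y⟫ := hsymm (g x) y
    _ = ‖g x‖ * fderiv ℝ (fun z => ‖g z‖) x y := by
        have hsq_y := DFunLike.congr_fun hsq y
        simp only [smul_apply, ContinuousLinearMap.comp_apply, innerSL_apply_apply, smul_eq_mul,
          nsmul_eq_mul, Nat.cast_ofNat, Nat.add_one_sub_one, pow_one] at hsq_y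
        linarith
    _ = ⟪‖g x‖ • gradient (fun z => ‖g z‖) x, y⟫ := by
        rw [real_inner_smul_left, inner_gradient_left]

end Gradient

section Trace

variable {E : Type*} [NormedAddCommGroup E] [InnerProductSpace ℝ E] [FiniteDimensional ℝ E]

lemma norm_sq_apply_le_traceCLM_comp_self {A : E →L[ℝ] E} (hA : (A : E →ₗ[ℝ] E).IsSymmetric)
    (x : E) : ‖A x‖ ^ 2 ≤ traceCLM E (A ∘L A) * ‖x‖ ^ 2 := by
  let b := stdOrthonormalBasis ℝ E
  calc ‖A x‖ ^ 2 = ∑ i, ⟪A (b i), x⟫ ^ 2 := by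
        rw [← b.sum_sq_inner_right (A x)]
        exact Finset.sum_congr rfl fun i _ => congrArg (· ^ 2) (hA (b i) x).symm
    _ ≤ ∑ i, ‖A (b i)‖ ^ 2 * ‖x‖ ^ 2 := by
        gcongr with i
        rw [← mul_pow, sq_le_sq, abs_of_nonneg (by positivity : 0 ≤ ‖A (b i)‖ * ‖x‖)]
        exact abs_real_inner_le_norm _ _
    _ = (∑ i, ⟪b i, A (A (b i))⟫) * ‖x‖ ^ 2 := by
        rw [Finset.sum_mul]
        exact Finset.sum_congr rfl fun i _ => by
          rw [← real_inner_self_eq_norm_sq]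
          exact congrArg (· * _) (hA (b i) (A (b i)))
    _ = traceCLM E (A ∘L A) * ‖x‖ ^ 2 :=
        congrArg (· * _) (LinearMap.trace_eq_sum_inner ((A ∘L A : E →L[ℝ] E) : E →ₗ[ℝ] E) b).symm

lemma traceCLM_comp_add_smulRight (A : E →L[ℝ] E) (a b : ℝ) (α β : E →L[ℝ] ℝ) (g : E) :
    traceCLM E ((a • A + α.smulRight g) ∘L (b • A + β.smulRight g)) =
      a * b * traceCLM E (A ∘L A) + a * β (A g) + b * α (A g) + α g * β g := by
  have hexpand : (a • A + α.smulRight g) ∘L (b • A + β.smulRight g) =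
      (a * b) • (A ∘L A) + a • β.smulRight (A g) + b • (α ∘L A).smulRight g
        + α g • β.smulRight g := by
    ext x
    simp only [add_apply, smul_apply, ContinuousLinearMap.comp_apply,
      ContinuousLinearMap.smulRight_apply, map_add, map_smul]
    module
  simp only [hexpand, map_add, map_smul, traceCLM_smulRight, smul_eq_mul,
    ContinuousLinearMap.comp_apply]

end Trace

section IntegrableGradient

variable {E : Type*} [NormedAddCommGroup E] [InnerProductSpace ℝ E] [FiniteDimensional ℝ E]
  [CompleteSpace E] [MeasurableSpace E] [BorelSpace E] {μ : Measure E}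

lemma integrable_inner_gradient [IsFiniteMeasureOnCompacts μ] {f : E → E} {ψ : E → ℝ} {C : NNReal}
    (hψ : LipschitzWith C ψ) (hψc : HasCompactSupport ψ)
    (hf : MemLp f ⊤ (μ.restrict (tsupport ψ))) :
    Integrable (fun x => ⟪f x, gradient ψ x⟫) μ := by
  simp only [inner_gradient_right, conj_trivial]
  refine integrable_of_memLp_top_restrict hψc (memLp_top_clm_apply (memLp_top_fderiv hψ) hf) ?_
  exact fun x hx => support_fderiv_subset ℝ fun h => hx (by simp [h])

lemma memLp_top_gradient_of_locallyLipschitzOn {f : E → ℝ} {U K : Set E} (hU : IsOpen U)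
    (hf : LocallyLipschitzOn U f) (hK : IsCompact K) (hKU : K ⊆ U) :
    MemLp (gradient f) ⊤ (μ.restrict K) :=
  (InnerProductSpace.toDual ℝ E).symm.lipschitz.comp_memLp (map_zero _)
    (memLp_top_fderiv_of_locallyLipschitzOn hU hf hK hKU)

end IntegrableGradient

section PLaplace

variable {E : Type*} [NormedAddCommGroup E] [InnerProductSpace ℝ E]

/-- The flux `|g|^(q-2) g` of the `q`-Laplacian, as a function of the exponent `q` and the
gradient `g`. -/
noncomputable def pLaplaceFlux (q : ℝ) (g : E) : E := ‖g‖ ^ (q - 2) • g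

/-- The matrix `D` of the paper, as an operator: `D w = |g|^(q-1) (w + (q-2)/|g|² ⟪g, w⟫ g)`, where
`g` stands for `∇u` and `q` for the exponent. -/
noncomputable def pLaplaceDiffusion (q : ℝ) (g : E) : E →L[ℝ] E :=
  ‖g‖ ^ (q - 1) • (.id ℝ E + ((q - 2) / ‖g‖ ^ 2) • (innerSL ℝ g).smulRight g)

/-- The vector `H` of the paper, where `g` stands for `∇u`, `q` for the exponent and `P` for its
gradient. -/
noncomputable def pLaplaceSource (q : ℝ) (g P : E) : E :=
  (‖g‖ ^ (q - 2) * Real.log ‖g‖ * ⟪g, P⟫) • g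

/-- The vector `B` of the paper, where `g` stands for `∇u`, `q` for the exponent and `P` for its
gradient. -/
noncomputable def pLaplaceDrift (q : ℝ) (g P : E) : E :=
  (‖g‖ ^ (q - 1) * Real.log ‖g‖) • P

lemma inner_pLaplaceDiffusion (q : ℝ) (g w s : E) : ⟪pLaplaceDiffusion q g w, s⟫ =
    ‖g‖ ^ (q - 1) * (⟪w, s⟫ + (q - 2) / ‖g‖ ^ 2 * ⟪g, w⟫ * ⟪g, s⟫) := by
  simp only [pLaplaceDiffusion, smul_apply, add_apply, ContinuousLinearMap.id_apply,
    ContinuousLinearMap.smulRight_apply, innerSL_apply_apply, inner_add_left, real_inner_smul_left]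
  ring

/-- The two sides differ by `ψ ‖g‖ ^ (q - 2) * (tr A² + (q - 2) ‖w‖²)`. -/
lemma le_traceCLM_flux_comp_test [FiniteDimensional ℝ E] {A : E →L[ℝ] E}
    (hA : (A : E →ₗ[ℝ] E).IsSymmetric) {g w P s : E} (hg : g ≠ 0) (hw : A g = ‖g‖ • w)
    {q ψ : ℝ} (hq : 1 ≤ q) (hψ : 0 ≤ ψ) :
    ⟪pLaplaceSource q g P, s⟫ + ⟪pLaplaceDrift q g P, w⟫ * ψ + ⟪pLaplaceDiffusion q g w, s⟫
      ≤ traceCLM E ((‖g‖ ^ (q - 2) • A + (innerSL ℝ (((q - 2) * ‖g‖ ^ (q - 2 - 1)) • w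
          + (‖g‖ ^ (q - 2) * Real.log ‖g‖) • P)).smulRight g)
          ∘L (ψ • A + (innerSL ℝ s).smulRight g)) := by
  have hv : 0 < ‖g‖ := norm_pos_iff.mpr hg
  have hwA : ‖w‖ ^ 2 ≤ traceCLM E (A ∘L A) := by
    have h := norm_sq_apply_le_traceCLM_comp_self hA g
    rw [hw, norm_smul, norm_norm, mul_pow, mul_comm] at h
    exact le_of_mul_le_mul_right h (by positivity)
  have hgap : 0 ≤ ψ * ‖g‖ ^ (q - 2) * (traceCLM E (A ∘L A) + (q - 2) * ‖w‖ ^ 2) :=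
    mul_nonneg (by positivity) (by nlinarith [sq_nonneg ‖w‖])
  have hpow1 : ‖g‖ ^ (q - 1) = ‖g‖ ^ (q - 2) * ‖g‖ := by
    rw [← Real.rpow_add_one hv.ne']
    ring_nf
  have hpow3 : ‖g‖ ^ (q - 2 - 1) = ‖g‖ ^ (q - 2) / ‖g‖ := Real.rpow_sub_one hv.ne' _
  rw [← sub_nonneg]
  refine hgap.trans_eq ?_
  rw [traceCLM_comp_add_smulRight, inner_pLaplaceDiffusion, pLaplaceSource, pLaplaceDrift, hw,
    hpow1, hpow3]
  simp only [innerSL_apply_apply, real_inner_smul_left, real_inner_smul_right, inner_add_left,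
    real_inner_self_eq_norm_sq, real_inner_comm w s, real_inner_comm w g, real_inner_comm s g,
    real_inner_comm P g]
  field_simp
  ring

lemma locallyLipschitzOn_pLaplaceFlux {α : Type*} [PseudoEMetricSpace α] {s : Set α} {q : α → ℝ}
    {g : α → E} (hq : LocallyLipschitzOn s q) (hg : LocallyLipschitzOn s g)
    (hg0 : ∀ x ∈ s, g x ≠ 0) : LocallyLipschitzOn s fun x => pLaplaceFlux (q x) (g x) :=
  locallyLipschitzOn_comp_of_contDiffAt (φ := fun z : ℝ × E => ‖z.2‖ ^ (z.1 - 2) • z.2)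
    (fun x hx => (((contDiffAt_snd.norm ℝ (hg0 x hx)).rpow (contDiffAt_fst.sub contDiffAt_const)
      (norm_ne_zero_iff.mpr (hg0 x hx))).smul contDiffAt_snd))
    (locallyLipschitzOn_prodMk hq hg)

variable [CompleteSpace E]

lemma hasFDerivAt_pLaplaceFlux {q : E → ℝ} {g : E → E} {x : E} (hq : DifferentiableAt ℝ q x)
    (hg : DifferentiableAt ℝ g x) (hgx : g x ≠ 0) :
    HasFDerivAt (fun y => pLaplaceFlux (q y) (g y))
      (‖g x‖ ^ (q x - 2) • fderiv ℝ g x + (innerSL ℝ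
        (((q x - 2) * ‖g x‖ ^ (q x - 2 - 1)) • gradient (fun y => ‖g y‖) x
          + (‖g x‖ ^ (q x - 2) * Real.log ‖g x‖) • gradient q x)).smulRight (g x)) x := by
  have hpow := (hg.norm ℝ hgx).hasFDerivAt.rpow (hq.hasFDerivAt.sub_const 2)
    (norm_pos_iff.mpr hgx)
  simpa only [pLaplaceFlux, map_add, map_smul, innerSL_gradient] using! hpow.smul hg.hasFDerivAt

lemma le_traceCLM_fderiv_pLaplaceFlux_comp_fderiv_smul [FiniteDimensional ℝ E] {q ψ : E → ℝ}
    {g : E → E} {x : E} (hq : DifferentiableAt ℝ q x) (hg : DifferentiableAt ℝ g x) (hgx : g x ≠ 0)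
    (hsymm : (fderiv ℝ g x : E →ₗ[ℝ] E).IsSymmetric) (hqx : 1 ≤ q x)
    (hψ : DifferentiableAt ℝ ψ x) (hψx : 0 ≤ ψ x) :
    ⟪pLaplaceSource (q x) (g x) (gradient q x), gradient ψ x⟫
        + ⟪pLaplaceDrift (q x) (g x) (gradient q x), gradient (fun y => ‖g y‖) x⟫ * ψ x
        + ⟪pLaplaceDiffusion (q x) (g x) (gradient (fun y => ‖g y‖) x), gradient ψ x⟫
      ≤ traceCLM E (fderiv ℝ (fun y => pLaplaceFlux (q y) (g y)) x ∘L
          fderiv ℝ (fun y => ψ y • g y) x) := by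
  rw [(hasFDerivAt_pLaplaceFlux hq hg hgx).fderiv, fderiv_fun_smul hψ hg, ← innerSL_gradient ψ]
  exact le_traceCLM_flux_comp_test hsymm hgx
    (fderiv_apply_self_eq_norm_smul_gradient_norm hg hgx hsymm) hqx hψx

end PLaplace

section EssentiallyBoundedCoefficients

lemma continuousOn_norm_rpow {X E : Type*} [TopologicalSpace X] [NormedAddCommGroup E] {K : Set X}
    {q : X → ℝ} {g : X → E} (hq : ContinuousOn q K) (hg : ContinuousOn g K)
    (hg0 : ∀ x ∈ K, g x ≠ 0) : ContinuousOn (fun x => ‖g x‖ ^ q x) K :=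
  hg.norm.rpow hq fun x hx => .inl (norm_ne_zero_iff.mpr (hg0 x hx))

variable {E : Type*} [NormedAddCommGroup E] [InnerProductSpace ℝ E] [MeasurableSpace E]
  [BorelSpace E] {μ : Measure E} {K : Set E} {q : E → ℝ} {g f : E → E}

lemma memLp_top_pLaplaceDiffusion (hK : IsCompact K) (hq : ContinuousOn q K)
    (hg : ContinuousOn g K) (hg0 : ∀ x ∈ K, g x ≠ 0) (hf : MemLp f ⊤ (μ.restrict K)) :
    MemLp (fun x => pLaplaceDiffusion (q x) (g x) (f x)) ⊤ (μ.restrict K) := by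
  refine memLp_top_clm_apply (memLp_top_of_continuousOn hK ?_) hf
  have hpow : ContinuousOn (fun x => ‖g x‖ ^ (q x - 1)) K :=
    continuousOn_norm_rpow (hq.sub continuousOn_const) hg hg0
  have hquot : ContinuousOn (fun x => (q x - 2) / ‖g x‖ ^ 2) K :=
    (hq.sub continuousOn_const).div (hg.norm.pow 2) fun x hx => by simpa using hg0 x hx
  have hrank : ContinuousOn (fun x => (innerSL ℝ (g x)).smulRight (g x)) K :=
    (ContinuousLinearMap.smulRightL ℝ E E).isBoundedBilinearMap.continuous.comp_continuousOn
      (((innerSL ℝ).continuous.comp_continuousOn hg).prodMk hg)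
  exact hpow.smul (continuousOn_const.add (hquot.smul hrank))

lemma memLp_top_pLaplaceSource (hK : IsCompact K) (hq : ContinuousOn q K)
    (hg : ContinuousOn g K) (hg0 : ∀ x ∈ K, g x ≠ 0) (hf : MemLp f ⊤ (μ.restrict K)) :
    MemLp (fun x => pLaplaceSource (q x) (g x) (f x)) ⊤ (μ.restrict K) := by
  have hcoef : ContinuousOn (fun x => ‖g x‖ ^ (q x - 2) * Real.log ‖g x‖) K :=
    (continuousOn_norm_rpow (hq.sub continuousOn_const) hg hg0).mul
      (hg.norm.log fun x hx => norm_ne_zero_iff.mpr (hg0 x hx))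
  have hinner := memLp_top_inner (memLp_top_of_continuousOn hK hg) hf
  exact (memLp_top_of_continuousOn hK hg).smul
    (hinner.mul' (r := ⊤) (memLp_top_of_continuousOn hK hcoef))

lemma memLp_top_pLaplaceDrift (hK : IsCompact K) (hq : ContinuousOn q K)
    (hg : ContinuousOn g K) (hg0 : ∀ x ∈ K, g x ≠ 0) (hf : MemLp f ⊤ (μ.restrict K)) :
    MemLp (fun x => pLaplaceDrift (q x) (g x) (f x)) ⊤ (μ.restrict K) :=
  hf.smul (memLp_top_of_continuousOn hK <|
    (continuousOn_norm_rpow (hq.sub continuousOn_const) hg hg0).mul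
      (hg.norm.log fun x hx => norm_ne_zero_iff.mpr (hg0 x hx)))

end EssentiallyBoundedCoefficients

section Subsolution

variable {E : Type*} [NormedAddCommGroup E] [InnerProductSpace ℝ E] [FiniteDimensional ℝ E]
  [CompleteSpace E] [MeasurableSpace E] [BorelSpace E] {μ : Measure E} {Ω : Set E} {p ψ : E → ℝ}
  {g : E → E} {C : NNReal}

section Integrable

variable [IsFiniteMeasureOnCompacts μ]

lemma integrable_inner_pLaplaceSource_gradient (hΩ : IsOpen Ω) (hp : LocallyLipschitzOn Ω p)
    (hg : ContinuousOn g Ω) (hg0 : ∀ x ∈ Ω, g x ≠ 0) (hψ : LipschitzWith C ψ)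
    (hψc : HasCompactSupport ψ) (hψΩ : tsupport ψ ⊆ Ω) :
    Integrable (fun x => ⟪pLaplaceSource (p x) (g x) (gradient p x), gradient ψ x⟫) μ :=
  integrable_inner_gradient hψ hψc <|
    memLp_top_pLaplaceSource hψc (hp.continuousOn.mono hψΩ) (hg.mono hψΩ)
      (fun x hx => hg0 x (hψΩ hx)) (memLp_top_gradient_of_locallyLipschitzOn hΩ hp hψc hψΩ)

lemma integrable_inner_pLaplaceDrift_mul (hΩ : IsOpen Ω) (hp : LocallyLipschitzOn Ω p)
    (hg : LocallyLipschitzOn Ω g) (hg0 : ∀ x ∈ Ω, g x ≠ 0) (hψ : Continuous ψ)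
    (hψc : HasCompactSupport ψ) (hψΩ : tsupport ψ ⊆ Ω) :
    Integrable (fun x => ⟪pLaplaceDrift (p x) (g x) (gradient p x),
      gradient (fun z => ‖g z‖) x⟫ * ψ x) μ :=
  integrable_mul_of_memLp_top_restrict hψ hψc <| memLp_top_inner
    (memLp_top_pLaplaceDrift hψc (hp.continuousOn.mono hψΩ) (hg.continuousOn.mono hψΩ)
      (fun x hx => hg0 x (hψΩ hx)) (memLp_top_gradient_of_locallyLipschitzOn hΩ hp hψc hψΩ))
    (memLp_top_gradient_of_locallyLipschitzOn hΩ (locallyLipschitzOn_norm hg) hψc hψΩ)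

lemma integrable_inner_pLaplaceDiffusion_gradient (hΩ : IsOpen Ω) (hp : ContinuousOn p Ω)
    (hg : LocallyLipschitzOn Ω g) (hg0 : ∀ x ∈ Ω, g x ≠ 0) (hψ : LipschitzWith C ψ)
    (hψc : HasCompactSupport ψ) (hψΩ : tsupport ψ ⊆ Ω) :
    Integrable (fun x => ⟪pLaplaceDiffusion (p x) (g x) (gradient (fun z => ‖g z‖) x),
      gradient ψ x⟫) μ :=
  integrable_inner_gradient hψ hψc <|
    memLp_top_pLaplaceDiffusion hψc (hp.mono hψΩ) (hg.continuousOn.mono hψΩ)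
      (fun x hx => hg0 x (hψΩ hx))
      (memLp_top_gradient_of_locallyLipschitzOn hΩ (locallyLipschitzOn_norm hg) hψc hψΩ)

end Integrable

variable [μ.IsAddHaarMeasure] {u : E → ℝ}

lemma ae_isSymmetric_fderiv_gradient (hΩ : IsOpen Ω) (hu : DifferentiableOn ℝ u Ω)
    (hu' : LocallyLipschitzOn Ω (gradient u)) :
    ∀ᵐ x ∂μ, x ∈ Ω → (fderiv ℝ (gradient u) x : E →ₗ[ℝ] E).IsSymmetric := by
  filter_upwards [ae_differentiableAt_of_locallyLipschitzOn (μ := μ) hΩ hu'] with x hx hxΩ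
  exact isSymmetric_fderiv_gradient ((hΩ.eventually_mem hxΩ).mono fun y hy =>
    hu.differentiableAt (hΩ.mem_nhds hy)) (hx hxΩ)

theorem stmt_12_general (hΩ : IsOpen Ω) (hp : LocallyLipschitzOn Ω p) (hp1 : ∀ x ∈ Ω, 1 ≤ p x)
    (hu : DifferentiableOn ℝ u Ω) (hu' : LocallyLipschitzOn Ω (gradient u))
    (hu0 : ∀ x ∈ Ω, gradient u x ≠ 0)
    (hsol : WeaklyDivFreeOn (fun x => pLaplaceFlux (p x) (gradient u x)) Ω μ)
    (hψ : LipschitzWith C ψ) (hψc : HasCompactSupport ψ) (hψΩ : tsupport ψ ⊆ Ω)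
    (hψ0 : ∀ x, 0 ≤ ψ x) :
    (∫ x in Ω, ⟪pLaplaceSource (p x) (gradient u x) (gradient p x), gradient ψ x⟫ ∂μ)
        + (∫ x in Ω, ⟪pLaplaceDrift (p x) (gradient u x) (gradient p x),
            gradient (fun z => ‖gradient u z‖) x⟫ * ψ x ∂μ)
      ≤ -∫ x in Ω, ⟪pLaplaceDiffusion (p x) (gradient u x)
            (gradient (fun z => ‖gradient u z‖) x), gradient ψ x⟫ ∂μ := by
  have : ProperSpace E := FiniteDimensional.proper ℝ E
  have hflux := locallyLipschitzOn_pLaplaceFlux hp hu' hu0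
  obtain ⟨D, hζ⟩ := exists_lipschitzWith_of_hasCompactSupport
    (locallyLipschitz_smul_of_tsupport_subset hΩ hψ.locallyLipschitz hψΩ hu') hψc.smul_right
  have hζΩ : tsupport (fun x => ψ x • gradient u x) ⊆ Ω :=
    (closure_mono (Function.support_smul_subset_left ψ (gradient u))).trans hψΩ
  have hH := (integrable_inner_pLaplaceSource_gradient (μ := μ) hΩ hp hu'.continuousOn hu0 hψ hψc
    hψΩ).integrableOn (s := Ω)
  have hB := (integrable_inner_pLaplaceDrift_mul (μ := μ) hΩ hp hu' hu0 hψ.continuous hψc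
    hψΩ).integrableOn (s := Ω)
  have hD := (integrable_inner_pLaplaceDiffusion_gradient (μ := μ) hΩ hp.continuousOn hu' hu0 hψ hψc
    hψΩ).integrableOn (s := Ω)
  rw [le_neg_iff_add_nonpos_right, ← integral_add' hH hB, ← integral_add' (hH.add hB) hD,
    ← setIntegral_traceCLM_fderiv_comp_fderiv_eq_zero hΩ hflux hsol hζ hψc.smul_right hζΩ]
  refine setIntegral_mono_on_ae ((hH.add hB).add hD) (integrable_traceCLM_fderiv_comp_fderiv hΩ
    hflux hζ hψc.smul_right hζΩ).integrableOn hΩ.measurableSet ?_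
  filter_upwards [ae_differentiableAt_of_locallyLipschitzOn hΩ hp,
    ae_differentiableAt_of_locallyLipschitzOn hΩ hu', ae_isSymmetric_fderiv_gradient hΩ hu hu',
    hψ.ae_differentiableAt] with x hpx hux hsymm hψx hx
  exact le_traceCLM_fderiv_pLaplaceFlux_comp_fderiv_smul (hpx hx) (hux hx) (hu0 x hx) (hsymm hx)
    (hp1 x hx) hψx (hψ0 x)

end Subsolution

lemma sum_sum_eq_inner_pLaplaceDiffusion {ι : Type*} [Fintype ι] [DecidableEq ι] (q : ℝ)
    (g w s : EuclideanSpace ℝ ι) :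
    ∑ i, ∑ j, (‖g‖ ^ (q - 1) * ((if i = j then (1 : ℝ) else 0) + ((q - 2) / ‖g‖ ^ 2) *
        ⟪g, EuclideanSpace.single i (1 : ℝ)⟫ * ⟪g, EuclideanSpace.single j (1 : ℝ)⟫))
        * ⟪w, EuclideanSpace.single j (1 : ℝ)⟫ * ⟪s, EuclideanSpace.single i (1 : ℝ)⟫ =
      ⟪pLaplaceDiffusion q g w, s⟫ := by
  have hsplit (i j : ι) : (‖g‖ ^ (q - 1) * ((if i = j then (1 : ℝ) else 0)
      + ((q - 2) / ‖g‖ ^ 2) * g i * g j)) * w j * s i =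
        ‖g‖ ^ (q - 1) * (if i = j then w j * s i else 0)
          + ‖g‖ ^ (q - 1) * ((q - 2) / ‖g‖ ^ 2) * (g i * s i * (g j * w j)) := by
    split_ifs <;> ring
  have hinner (a b : EuclideanSpace ℝ ι) : ⟪a, b⟫ = ∑ i, a i * b i := by
    simp [PiLp.inner_apply, mul_comm]
  simp only [EuclideanSpace.inner_single_right, conj_trivial, one_mul, hsplit,
    Finset.sum_add_distrib, ← Finset.mul_sum, Finset.sum_ite_eq, Finset.mem_univ, if_true,
    ← Finset.sum_mul]
  rw [inner_pLaplaceDiffusion, hinner g w, hinner g s, hinner w s]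
  ring

/-- Let `Ω ⊂ ℝ^N` be open, `p` Lipschitz with
`1 < p_min ≤ p ≤ p_max < ∞`, and `u ∈ C²(Ω)` with `0 < c₁ ≤ |∇u| ≤ c₂ < ∞` a weak
solution of `Δ_{p(x)}u = 0` in `Ω`. Then `v = |∇u|` satisfies, for every nonnegative
`ψ ∈ C_c^∞(Ω)`,
`−∫_Ω D_{ij} v_{x_j} ψ_{x_i} ≥ ∫_Ω H·∇ψ + ∫_Ω (B·∇v) ψ`, where
`D_{ij} = |∇u|^{p−1}(δ_{ij} + ((p−2)/|∇u|²) u_{x_i} u_{x_j})`,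
`H = |∇u|^{p−2} log|∇u| ⟨∇u, ∇p⟩ ∇u`, `B = |∇u|^{p−1} log|∇u| ∇p`;
i.e. `v` is a weak subsolution of `−div(D∇v) + B·∇v ≤ div H` in `Ω`. -/
theorem stmt_12 (N : ℕ) (Ω : Set (EuclideanSpace ℝ (Fin N))) (hΩ : IsOpen Ω)
    (p : EuclideanSpace ℝ (Fin N) → ℝ) (L : NNReal) (hpLip : LipschitzOnWith L p Ω)
    (pmin pmax : ℝ) (hpmin : 1 < pmin) (hbd : ∀ x ∈ Ω, pmin ≤ p x ∧ p x ≤ pmax)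
    (u : EuclideanSpace ℝ (Fin N) → ℝ) (hu : ContDiffOn ℝ 2 u Ω)
    (c₁ c₂ : ℝ) (hc₁ : 0 < c₁)
    (hgb : ∀ x ∈ Ω, c₁ ≤ ‖gradient u x‖ ∧ ‖gradient u x‖ ≤ c₂)
    (hsol : ∀ η : EuclideanSpace ℝ (Fin N) → ℝ, ContDiff ℝ (⊤ : ℕ∞) η →
      HasCompactSupport η → tsupport η ⊆ Ω →
      ∫ x in Ω, ‖gradient u x‖ ^ (p x - 2) * ⟪gradient u x, gradient η x⟫ = 0) :
    ∀ ψ : EuclideanSpace ℝ (Fin N) → ℝ, ContDiff ℝ (⊤ : ℕ∞) ψ →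
      HasCompactSupport ψ → tsupport ψ ⊆ Ω → (∀ x, 0 ≤ ψ x) →
      (∫ x in Ω,
          ⟪(‖gradient u x‖ ^ (p x - 2) * Real.log ‖gradient u x‖ *
              ⟪gradient u x, gradient p x⟫) • gradient u x, gradient ψ x⟫)
        + (∫ x in Ω,
            ⟪(‖gradient u x‖ ^ (p x - 1) * Real.log ‖gradient u x‖) • gradient p x,
              gradient (fun z => ‖gradient u z‖) x⟫ * ψ x)
      ≤ -∫ x in Ω, ∑ i : Fin N, ∑ j : Fin N,
          (‖gradient u x‖ ^ (p x - 1) *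
              ((if i = j then (1 : ℝ) else 0) +
                ((p x - 2) / ‖gradient u x‖ ^ 2) *
                  ⟪gradient u x, EuclideanSpace.single i (1 : ℝ)⟫ *
                  ⟪gradient u x, EuclideanSpace.single j (1 : ℝ)⟫))
            * ⟪gradient (fun z => ‖gradient u z‖) x, EuclideanSpace.single j (1 : ℝ)⟫
            * ⟪gradient ψ x, EuclideanSpace.single i (1 : ℝ)⟫ := by
  intro ψ hψ hψc hψΩ hψ0
  obtain ⟨C, hψLip⟩ := (hψ.of_le (by simp)).lipschitzWith_of_hasCompactSupport hψc one_ne_zero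
  have hp1 : ∀ x ∈ Ω, 1 ≤ p x := fun x hx => hpmin.le.trans (hbd x hx).1
  have hu' : LocallyLipschitzOn Ω (gradient u) := locallyLipschitzOn_of_contDiffOn hΩ <|
    contDiffOn_gradient hΩ (by rwa [one_add_one_eq_two])
  have hu0 : ∀ x ∈ Ω, gradient u x ≠ 0 := fun x hx =>
    norm_pos_iff.mp (hc₁.trans_le (hgb x hx).1)
  have hdiv : WeaklyDivFreeOn (fun x => pLaplaceFlux (p x) (gradient u x)) Ω volume := by
    simpa only [WeaklyDivFreeOn, pLaplaceFlux, map_smul, smul_eq_mul, inner_gradient_right,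
      conj_trivial] using hsol
  simp only [sum_sum_eq_inner_pLaplaceDiffusion]
  exact stmt_12_general hΩ (fun _ _ => ⟨L, Ω, self_mem_nhdsWithin, hpLip⟩) hp1
    (hu.differentiableOn two_ne_zero) hu' hu0 hdiv hψLip hψc hψΩ hψ0
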